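/- Let n ≥ 2. Every class [f] ∈ 𝒜̄ₙ(+) can be expressed uniquely, up to the order of the summands, as [f] = [f₁] + ⋯ + [f_r], where each fⱼ ∈ 𝒜_{kⱼ}(×, ÷) and (k₁, …, k_r) is a non-trivial partition of n (i.e., r ≥ 2, k₁ ≤ ⋯ ≤ k_r, and k₁ + ⋯ + k_r = n). -/

import Mathlib

/- Common framework: `K = ℝ(x₁,x₂,…)` is the field of rational functions over `ℝ` in
countably many variables (the fraction field of `MvPolynomial ℕ ℝ`), arithmetic
expressions, the permutation action, isomorphism, types, the `EndsWith` classification,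
multilinear forms and monicity, isomorphism classes and their counting. -/

open MvPolynomial

noncomputable section

abbrev P : Type := MvPolynomial ℕ ℝ
abbrev K : Type := FractionRing P

def toK : P →+* K := algebraMap P K

/-- The variable `xᵢ`, as an element of `K`. -/
def Xv (i : ℕ) : K := toK (X i)

/-- `Vars f` : the set of variables on which `f` depends, i.e. the variables occurring in a
representation of `f` as a quotient of two coprime polynomials. -/
def Vars (f : K) : Set ℕ :=
  {i | ∃ p q : P, q ≠ 0 ∧ IsRelPrime p q ∧ f = toK p / toK q ∧ (i ∈ p.vars ∨ i ∈ q.vars)}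

/-- `𝒜` : the smallest subset of `K` containing every variable and closed under the four
binary operations applied to expressions with disjoint variable sets. -/
inductive IsAE : K → Prop
  | var (i : ℕ) : IsAE (Xv i)
  | add {g h : K} : IsAE g → IsAE h → Disjoint (Vars g) (Vars h) → IsAE (g + h)
  | sub {g h : K} : IsAE g → IsAE h → Disjoint (Vars g) (Vars h) → IsAE (g - h)
  | mul {g h : K} : IsAE g → IsAE h → Disjoint (Vars g) (Vars h) → IsAE (g * h)
  | div {g h : K} : IsAE g → IsAE h → Disjoint (Vars g) (Vars h) → IsAE (g / h)

/-- The action `σ·f` of a permutation of the variables on `K`, substituting `σ(xᵢ)` for `xᵢ`. -/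
def permAct (σ : Equiv.Perm ℕ) : K ≃+* K :=
  IsFractionRing.ringEquivOfRingEquiv (renameEquiv ℝ σ).toRingEquiv

/-- `f ≅ g` : `f` and `g` are isomorphic, i.e. differ by a permutation of the variables. -/
def Iso (f g : K) : Prop := ∃ σ : Equiv.Perm ℕ, permAct σ f = g

/-- First type: `-f ∉ 𝒜`. -/
def FirstType (f : K) : Prop := IsAE f ∧ ¬ IsAE (-f)

/-- Second type: `-f ∈ 𝒜` but `f ≇ -f`. -/
def SecondType (f : K) : Prop := IsAE f ∧ IsAE (-f) ∧ ¬ Iso f (-f)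

/-- Third type: `-f ∈ 𝒜` and `f ≅ -f`. -/
def ThirdType (f : K) : Prop := IsAE f ∧ IsAE (-f) ∧ Iso f (-f)

/-- The four binary operators. -/
inductive Op : Type
  | add | sub | mul | div
deriving DecidableEq

/-- `EndsWith f o` : the arithmetic expression `f` ends with the operator `o`. -/
inductive EndsWith : K → Op → Prop
  | var (i : ℕ) : EndsWith (Xv i) Op.mul
  | add_base {i j : ℕ} (hij : i ≠ j) : EndsWith (Xv i + Xv j) Op.add
  | sub_base {i j : ℕ} (hij : i ≠ j) : EndsWith (Xv i - Xv j) Op.sub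
  | mul_base {i j : ℕ} (hij : i ≠ j) : EndsWith (Xv i * Xv j) Op.mul
  | div_base {i j : ℕ} (hij : i ≠ j) : EndsWith (Xv i / Xv j) Op.div
  | add_rec {g h : K} {o₁ o₂ : Op} : IsAE g → IsAE h → Disjoint (Vars g) (Vars h) →
      3 ≤ (Vars (g + h)).ncard → o₁ ≠ Op.sub → o₂ ≠ Op.sub →
      EndsWith g o₁ → EndsWith h o₂ → EndsWith (g + h) Op.add
  | mul_rec {g h : K} {o₁ o₂ : Op} : IsAE g → IsAE h → Disjoint (Vars g) (Vars h) →
      3 ≤ (Vars (g * h)).ncard → o₁ ≠ Op.div → o₂ ≠ Op.div →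
      EndsWith g o₁ → EndsWith h o₂ → EndsWith (g * h) Op.mul
  | div_rec {g h : K} {o₁ o₂ : Op} : IsAE g → IsAE h → Disjoint (Vars g) (Vars h) →
      3 ≤ (Vars (g / h)).ncard → o₁ ≠ Op.div → o₂ ≠ Op.div →
      EndsWith g o₁ → EndsWith h o₂ → EndsWith (g / h) Op.div
  | sub_rec {g h : K} {o₁ o₂ : Op} : IsAE g → IsAE h → Disjoint (Vars g) (Vars h) →
      3 ≤ (Vars (g - h)).ncard → o₁ ≠ Op.sub → o₂ ≠ Op.sub → FirstType h →
      EndsWith g o₁ → EndsWith h o₂ → EndsWith (g - h) Op.sub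

/-- `f` ends with one of the operators in `s`. -/
def EndsIn (f : K) (s : Set Op) : Prop := ∃ o ∈ s, EndsWith f o

/-- The binary operation on `K` corresponding to an operator. -/
def applyOp (o : Op) (a b : K) : K :=
  match o with
  | Op.add => a + b
  | Op.sub => a - b
  | Op.mul => a * b
  | Op.div => a / b

/-- The variable index set `{1, …, n}` (for the variables `x₁, …, xₙ`). -/
def varsUpTo (n : ℕ) : Set ℕ := {i | 1 ≤ i ∧ i ≤ n}

/-- `𝒜ₙ` : arithmetic expressions whose variable set is exactly `{x₁, …, xₙ}`. -/
def AEn (n : ℕ) : Set K := {f | IsAE f ∧ Vars f = varsUpTo n}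

/-- A multilinear polynomial: degree at most `1` in each variable. -/
def Multilinear (p : P) : Prop := ∀ i : ℕ, p.degreeOf i ≤ 1

/-- The key of a (multilinear) monomial: the sorted list of variables occurring in it;
keys are compared in the lexicographic order on lists. -/
def monKey (m : ℕ →₀ ℕ) : List ℕ := m.support.sort (· ≤ ·)

/-- A (multilinear) polynomial is monic if the coefficient of its lexicographically
leading (i.e. first) monomial is positive. -/
def MonicML (p : P) : Prop :=
  ∃ m ∈ p.support, 0 < p.coeff m ∧ ∀ m' ∈ p.support, monKey m ≤ monKey m'

/-- `MLForm f F₁ F₂` : `F₁ / F₂` is the multilinear form of `f`: `F₁, F₂` are coprime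
multilinear polynomials, `F₂` is monic, and `f = F₁ / F₂`. -/
def MLForm (f : K) (F₁ F₂ : P) : Prop :=
  Multilinear F₁ ∧ Multilinear F₂ ∧ IsRelPrime F₁ F₂ ∧ F₂ ≠ 0 ∧ MonicML F₂ ∧
    f = toK F₁ / toK F₂

/-- A monic arithmetic expression: the numerator of its multilinear form is monic as well. -/
def MonicAE (f : K) : Prop := ∃ F₁ F₂ : P, MLForm f F₁ F₂ ∧ MonicML F₁

/-- The isomorphism class of `f`. -/
def classOf (f : K) : Set K := {g | Iso f g}

/-- `S̄` : the set of isomorphism classes of elements of `S`. -/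
def classes (S : Set K) : Set (Set K) := classOf '' S

/-- `|S̄|` : the number of isomorphism classes of elements of `S`. -/
def countClasses (S : Set K) : ℕ := (classes S).ncard

/-- The number of isomorphism classes of elements of `S` depending on exactly `k` variables. -/
def gradeCount (S : Set K) (k : ℕ) : ℕ := countClasses {f ∈ S | (Vars f).ncard = k}

/-- `ω_n` for a graded family having `N k` elements in grade `k` : the sum over all
partitions `(k₁^{m₁},…,k_s^{m_s})` of `n` of `∏ⱼ C(N kⱼ + mⱼ - 1, mⱼ)`. -/
def omega (N : ℕ → ℕ) (n : ℕ) : ℕ :=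
  ∑ p : n.Partition,
    ∏ k ∈ p.parts.toFinset, Nat.choose (N k + p.parts.count k - 1) (p.parts.count k)

/-- `ω_n′` : the same sum restricted to non-trivial partitions, i.e. `ω_n - N n`. -/
def omega' (N : ℕ → ℕ) (n : ℕ) : ℕ := omega N n - N n

/-- `𝒜(s)` : arithmetic expressions ending with one of the operators in `s`. -/
def Aset (s : Set Op) : Set K := {f | IsAE f ∧ EndsIn f s}

/-- `ℱ(s)` : first-type arithmetic expressions ending with one of the operators in `s`. -/
def Fset (s : Set Op) : Set K := {f | FirstType f ∧ EndsIn f s}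

/-- `ℬ(s)` : second-type arithmetic expressions ending with one of the operators in `s`. -/
def Bset (s : Set Op) : Set K := {f | SecondType f ∧ EndsIn f s}

/-- `𝒞(s)` : third-type arithmetic expressions ending with one of the operators in `s`. -/
def Cset (s : Set Op) : Set K := {f | ThirdType f ∧ EndsIn f s}

/-- `ℳℬ(s)` : monic second-type arithmetic expressions ending with an operator in `s`. -/
def MBset (s : Set Op) : Set K := {f | SecondType f ∧ MonicAE f ∧ EndsIn f s}


/-- A representative-level decomposition of the class `[f]` as a sum `[f₁] + ⋯ + [f_r]`
(`r ≥ 2`) where each summand is in `𝒜(×,÷)`, the representatives have pairwise disjoint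
variable sets, and the sizes of their variable sets form a (non-trivial) partition of `n`. -/
def ClassSumDecomp (n : ℕ) (f : K) (s : Multiset K) : Prop :=
  2 ≤ Multiset.card s ∧
  (∀ g ∈ s, IsAE g ∧ EndsIn g {Op.mul, Op.div}) ∧
  s.Pairwise (fun a b => Disjoint (Vars a) (Vars b)) ∧
  Iso f s.sum ∧
  (s.map fun g => (Vars g).ncard).sum = n

/-!
A variable `xᵢ` occurs in `f` exactly when `∂f/∂xᵢ ≠ 0`, so the decomposition can be read off from
derivatives. If `F` is a sum of pieces with pairwise disjoint variable sets, then `∂ᵢF` only sees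
the piece containing `xᵢ`; in particular `∂ⱼ∂ᵢF ≠ 0` forces `xᵢ` and `xⱼ` into the same piece.
A piece ending with `×` or `÷` is a variable or a product `gh` in disjoint variables, and
`∂ⱼ∂ᵢ(gh) = ∂ᵢg ∂ⱼh ≠ 0` for all `i ∈ 𝒱(g)`, `j ∈ 𝒱(h)`. These relations connect all of its
variables, so `F` determines the partition of its variables into pieces. The derivatives determine
each piece `a` up to an additive constant, and the identity `a ∂ⱼ∂ᵢa = ∂ᵢa ∂ⱼa`, valid whenever `i`
and `j` lie in different factors of `a`, fixes the constant. An isomorphism of two sums becomes an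
equality after relabelling the variables of one of them.
-/

/-! ### Partial derivatives of rational functions -/

section ExtendDerivation

variable {R A B M : Type*} [CommRing R] [CommRing A] [CommRing B] [Algebra R A] [Algebra R B]
  [Algebra A B] [IsScalarTower R A B] [Algebra.FormallyEtale A B] [AddCommGroup M] [Module R M]
  [Module A M] [Module B M] [IsScalarTower R A M] [IsScalarTower R B M] [IsScalarTower A B M]

/-- The extension of a derivation along a formally étale algebra (such as a localization),
obtained from `B ⊗[A] Ω[A⁄R] ≃ Ω[B⁄R]`. -/
def extendDerivation (d : Derivation R A M) : Derivation R B M :=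
  (d.liftKaehlerDifferential.liftBaseChange B ∘ₗ
    (KaehlerDifferential.tensorKaehlerEquivOfFormallyEtale R A B).symm.toLinearMap).compDer
      (KaehlerDifferential.D R B)

lemma extendDerivation_algebraMap (d : Derivation R A M) (a : A) :
    extendDerivation (B := B) d (algebraMap A B a) = d a := by
  simp [extendDerivation,
    KaehlerDifferential.tensorKaehlerEquivOfFormallyEtale_symm_D_algebraMap]

end ExtendDerivation

section PDeriv

variable {σ R : Type*}

lemma degreeOf_pderiv_lt [CommSemiring R] {i : σ} {p : MvPolynomial σ R} (h : pderiv i p ≠ 0) :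
    (pderiv i p).degreeOf i < p.degreeOf i := by
  have lt_of_mem_support : ∀ m ∈ (pderiv i p).support, m i < p.degreeOf i := by
    intro m hm
    rw [mem_support_iff, coeff_pderiv] at hm
    have hle := monomial_le_degreeOf i (mem_support_iff.2 (left_ne_zero_of_mul hm))
    rw [Finsupp.add_apply, Finsupp.single_eq_same] at hle
    omega
  obtain ⟨m, hm⟩ := support_nonempty.2 h
  exact (degreeOf_lt_iff (Nat.zero_lt_of_lt (lt_of_mem_support m hm))).2 lt_of_mem_support

lemma pderiv_eq_zero_iff_notMem_vars [CommSemiring R] [NoZeroDivisors R] [CharZero R] {i : σ}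
    {p : MvPolynomial σ R} : pderiv i p = 0 ↔ i ∉ p.vars := by
  refine ⟨fun h hi => ?_, pderiv_eq_zero_of_notMem_vars⟩
  obtain ⟨m, hm, him⟩ := (mem_vars_iff_mem_support i).1 hi
  have hle : Finsupp.single i 1 ≤ m := by
    rw [Finsupp.single_le_iff]
    exact Nat.one_le_iff_ne_zero.2 (Finsupp.mem_support_iff.1 him)
  have hcoeff := coeff_pderiv (i := i) p (m - Finsupp.single i 1)
  rw [h, coeff_zero, tsub_add_cancel_of_le hle, eq_comm] at hcoeff
  exact (mul_ne_zero (mem_support_iff.1 hm) (Nat.cast_add_one_ne_zero _)) hcoeff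

lemma pderiv_eq_zero_of_dvd [CommSemiring R] [NoZeroDivisors R] {i : σ} {q : MvPolynomial σ R}
    (h : q ∣ pderiv i q) : pderiv i q = 0 := by
  by_contra hne
  obtain ⟨r, hr⟩ := h
  have hqr : q * r ≠ 0 := hr ▸ hne
  have hdeg := degreeOf_mul_eq (n := i) (left_ne_zero_of_mul hqr) (right_ne_zero_of_mul hqr)
  have hlt := degreeOf_pderiv_lt hne
  rw [hr] at hlt
  omega

lemma pderiv_eq_zero_of_isRelPrime [CommSemiring R] [NoZeroDivisors R]
    [DecompositionMonoid (MvPolynomial σ R)] {i : σ} {p q : MvPolynomial σ R} (hq : q ≠ 0)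
    (hpq : IsRelPrime p q) (h : q * pderiv i p = p * pderiv i q) :
    pderiv i p = 0 ∧ pderiv i q = 0 := by
  have hq' : pderiv i q = 0 := pderiv_eq_zero_of_dvd (hpq.symm.dvd_of_dvd_mul_left ⟨_, h.symm⟩)
  rw [hq', mul_zero] at h
  exact ⟨(mul_eq_zero.1 h).resolve_left hq, hq'⟩

lemma pderiv_comm [CommRing R] (i j : σ) (p : MvPolynomial σ R) :
    pderiv i (pderiv j p) = pderiv j (pderiv i p) := by
  classical
  have h : ⁅pderiv (R := R) i, pderiv (R := R) j⁆ = 0 := derivation_ext fun k => by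
    simp [Derivation.commutator_apply, pderiv_X, Pi.single_apply, apply_ite]
  rw [← sub_eq_zero, ← Derivation.commutator_apply, h, Derivation.zero_apply]

end PDeriv

lemma toK_injective : Function.Injective toK :=
  IsFractionRing.injective P K

lemma toK_ne_zero {p : P} (hp : p ≠ 0) : toK p ≠ 0 :=
  (map_ne_zero_iff toK toK_injective).2 hp

lemma exists_isRelPrime_eq_div (f : K) :
    ∃ p q : P, q ≠ 0 ∧ IsRelPrime p q ∧ f = toK p / toK q := by
  obtain ⟨p, q, hpq, hf⟩ := IsFractionRing.exists_reduced_fraction (A := P) f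
  refine ⟨p, q, nonZeroDivisors.ne_zero q.2, hpq, ?_⟩
  rw [← hf, IsFractionRing.mk'_eq_div, toK]

/-- The partial derivative `∂/∂xᵢ` on `K`. -/
def partialDeriv (i : ℕ) : Derivation ℝ K K :=
  extendDerivation ((Algebra.linearMap P K).compDer (pderiv i))

lemma partialDeriv_toK (i : ℕ) (p : P) : partialDeriv i (toK p) = toK (pderiv i p) :=
  extendDerivation_algebraMap _ p

lemma partialDeriv_Xv (i j : ℕ) : partialDeriv i (Xv j) = if j = i then 1 else 0 := by
  rw [Xv, partialDeriv_toK, pderiv_X, Pi.single_apply]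
  split_ifs <;> simp

lemma partialDeriv_comm (i j : ℕ) (f : K) :
    partialDeriv i (partialDeriv j f) = partialDeriv j (partialDeriv i f) := by
  have commutator_toK (p : P) : ⁅partialDeriv i, partialDeriv j⁆ (toK p) = 0 := by
    simp only [Derivation.commutator_apply, partialDeriv_toK, pderiv_comm i j p, sub_self]
  obtain ⟨p, q, -, -, rfl⟩ := exists_isRelPrime_eq_div f
  rw [← sub_eq_zero, ← Derivation.commutator_apply, Derivation.leibniz_div]
  simp only [commutator_toK, smul_zero, sub_zero]

lemma mem_vars_iff_partialDeriv_ne_zero {i : ℕ} {f : K} :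
    i ∈ Vars f ↔ partialDeriv i f ≠ 0 := by
  constructor
  · rintro ⟨p, q, hq, hpq, rfl, hi⟩ hzero
    have hcross : q * pderiv i p = p * pderiv i q := by
      apply toK_injective
      simpa [Derivation.leibniz_div, partialDeriv_toK, toK_ne_zero hq, sub_eq_zero] using hzero
    obtain ⟨hp', hq'⟩ := pderiv_eq_zero_of_isRelPrime hq hpq hcross
    rw [pderiv_eq_zero_iff_notMem_vars] at hp' hq'
    exact hi.elim hp' hq'
  · intro hne
    obtain ⟨p, q, hq, hpq, rfl⟩ := exists_isRelPrime_eq_div f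
    refine ⟨p, q, hq, hpq, rfl, ?_⟩
    by_contra! hi
    simp [Derivation.leibniz_div, partialDeriv_toK, pderiv_eq_zero_of_notMem_vars hi.1,
      pderiv_eq_zero_of_notMem_vars hi.2] at hne

lemma notMem_vars_iff_partialDeriv_eq_zero {i : ℕ} {f : K} :
    i ∉ Vars f ↔ partialDeriv i f = 0 := by
  rw [mem_vars_iff_partialDeriv_ne_zero, not_not]

/-! ### Variable sets -/

lemma finite_vars (f : K) : (Vars f).Finite := by
  obtain ⟨p, q, -, -, rfl⟩ := exists_isRelPrime_eq_div f
  refine (p.vars ∪ q.vars).finite_toSet.subset fun i hi => ?_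
  contrapose! hi
  simp only [Finset.coe_union, Set.mem_union, Finset.mem_coe, not_or] at hi
  rw [notMem_vars_iff_partialDeriv_eq_zero, Derivation.leibniz_div, partialDeriv_toK,
    partialDeriv_toK, pderiv_eq_zero_of_notMem_vars hi.1, pderiv_eq_zero_of_notMem_vars hi.2]
  simp

lemma ne_zero_of_vars_nonempty {f : K} (hf : (Vars f).Nonempty) : f ≠ 0 := by
  rintro rfl
  obtain ⟨i, hi⟩ := hf
  exact mem_vars_iff_partialDeriv_ne_zero.1 hi (map_zero _)

lemma vars_Xv (i : ℕ) : Vars (Xv i) = {i} := by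
  ext j
  rw [mem_vars_iff_partialDeriv_ne_zero, partialDeriv_Xv]
  simp [eq_comm]

lemma disjoint_vars_Xv {i j : ℕ} (hij : i ≠ j) : Disjoint (Vars (Xv i)) (Vars (Xv j)) := by
  rwa [vars_Xv, vars_Xv, Set.disjoint_singleton]

lemma vars_zero : Vars 0 = ∅ := by
  ext i
  simp [mem_vars_iff_partialDeriv_ne_zero]

lemma vars_neg (f : K) : Vars (-f) = Vars f := by
  ext i
  simp [mem_vars_iff_partialDeriv_ne_zero]

lemma vars_inv (f : K) : Vars f⁻¹ = Vars f := by
  ext i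
  by_cases hf : f = 0 <;> simp [mem_vars_iff_partialDeriv_ne_zero, Derivation.leibniz_inv, hf]

lemma partialDeriv_eq_zero_of_disjoint {f g : K} (hfg : Disjoint (Vars f) (Vars g)) {i : ℕ}
    (hi : i ∈ Vars f) : partialDeriv i g = 0 :=
  notMem_vars_iff_partialDeriv_eq_zero.1 (Set.disjoint_left.1 hfg hi)

lemma vars_add {f g : K} (hfg : Disjoint (Vars f) (Vars g)) :
    Vars (f + g) = Vars f ∪ Vars g := by
  ext i
  by_cases hi : i ∈ Vars f
  · simpa [hi, mem_vars_iff_partialDeriv_ne_zero, partialDeriv_eq_zero_of_disjoint hfg hi]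
      using mem_vars_iff_partialDeriv_ne_zero.1 hi
  · simp [hi, mem_vars_iff_partialDeriv_ne_zero, notMem_vars_iff_partialDeriv_eq_zero.1 hi]

lemma partialDeriv_mul_of_mem_left {f g : K} (hfg : Disjoint (Vars f) (Vars g)) {i : ℕ}
    (hi : i ∈ Vars f) : partialDeriv i (f * g) = partialDeriv i f * g := by
  rw [Derivation.leibniz, partialDeriv_eq_zero_of_disjoint hfg hi, smul_zero, zero_add,
    smul_eq_mul, mul_comm]

lemma partialDeriv_mul_of_mem_right {f g : K} (hfg : Disjoint (Vars f) (Vars g)) {i : ℕ}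
    (hi : i ∈ Vars g) : partialDeriv i (f * g) = f * partialDeriv i g := by
  rw [mul_comm f g, partialDeriv_mul_of_mem_left hfg.symm hi, mul_comm]

lemma vars_mul {f g : K} (hfg : Disjoint (Vars f) (Vars g)) (hf : f ≠ 0) (hg : g ≠ 0) :
    Vars (f * g) = Vars f ∪ Vars g := by
  ext i
  by_cases hif : i ∈ Vars f
  · have hne := mem_vars_iff_partialDeriv_ne_zero.1 hif
    simp [hif, mem_vars_iff_partialDeriv_ne_zero, partialDeriv_mul_of_mem_left hfg hif, hne, hg]
  · have hzero := notMem_vars_iff_partialDeriv_eq_zero.1 hif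
    simp [hif, mem_vars_iff_partialDeriv_ne_zero, Derivation.leibniz, hzero, hf]

lemma vars_mul_of_nonempty {g h : K} (hgh : Disjoint (Vars g) (Vars h)) (hg : (Vars g).Nonempty)
    (hh : (Vars h).Nonempty) : Vars (g * h) = Vars g ∪ Vars h :=
  vars_mul hgh (ne_zero_of_vars_nonempty hg) (ne_zero_of_vars_nonempty hh)

lemma nontrivial_vars_mul {g h : K} (hgh : Disjoint (Vars g) (Vars h)) (hg : (Vars g).Nonempty)
    (hh : (Vars h).Nonempty) : (Vars (g * h)).Nontrivial := by
  obtain ⟨i, hi⟩ := hg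
  obtain ⟨j, hj⟩ := hh
  rw [vars_mul_of_nonempty hgh ⟨i, hi⟩ ⟨j, hj⟩]
  exact ⟨i, .inl hi, j, .inr hj, hgh.ne_of_mem hi hj⟩

lemma IsAE.nonempty_vars {f : K} (hf : IsAE f) : (Vars f).Nonempty := by
  induction hf with
  | var i => exact vars_Xv i ▸ Set.singleton_nonempty i
  | add _ _ hd hg _ =>
    rw [vars_add hd]
    exact hg.inl
  | @sub _ h _ _ hd hg _ =>
    rw [← vars_neg h] at hd
    rw [sub_eq_add_neg, vars_add hd]
    exact hg.inl
  | mul _ _ hd hg hh =>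
    rw [vars_mul_of_nonempty hd hg hh]
    exact hg.inl
  | @div _ h _ _ hd hg hh =>
    rw [← vars_inv h] at hd hh
    rw [div_eq_mul_inv, vars_mul_of_nonempty hd hg hh]
    exact hg.inl

lemma IsAE.ne_zero {f : K} (hf : IsAE f) : f ≠ 0 :=
  ne_zero_of_vars_nonempty hf.nonempty_vars

/-! ### Permutations of the variables -/

lemma permAct_toK (σ : Equiv.Perm ℕ) (p : P) : permAct σ (toK p) = toK (rename σ p) :=
  IsFractionRing.ringEquivOfRingEquiv_algebraMap _ p

lemma permAct_Xv (σ : Equiv.Perm ℕ) (i : ℕ) : permAct σ (Xv i) = Xv (σ i) := by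
  rw [Xv, permAct_toK, rename_X, Xv]

lemma permAct_one (f : K) : permAct 1 f = f := by
  obtain ⟨p, q, -, -, rfl⟩ := exists_isRelPrime_eq_div f
  simp [permAct_toK]

lemma permAct_mul (σ τ : Equiv.Perm ℕ) (f : K) :
    permAct (σ * τ) f = permAct σ (permAct τ f) := by
  obtain ⟨p, q, -, -, rfl⟩ := exists_isRelPrime_eq_div f
  simp [permAct_toK, rename_rename]

lemma Iso.refl (f : K) : Iso f f :=
  ⟨1, permAct_one f⟩

lemma Iso.symm {f g : K} : Iso f g → Iso g f := by
  rintro ⟨σ, rfl⟩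
  exact ⟨σ⁻¹, by rw [← permAct_mul, inv_mul_cancel, permAct_one]⟩

lemma Iso.trans {f g h : K} : Iso f g → Iso g h → Iso f h := by
  rintro ⟨σ, rfl⟩ ⟨τ, rfl⟩
  exact ⟨τ * σ, permAct_mul τ σ f⟩

lemma partialDeriv_permAct (σ : Equiv.Perm ℕ) (i : ℕ) (f : K) :
    partialDeriv (σ i) (permAct σ f) = permAct σ (partialDeriv i f) := by
  obtain ⟨p, q, -, -, rfl⟩ := exists_isRelPrime_eq_div f
  simp [Derivation.leibniz_div, permAct_toK, partialDeriv_toK, pderiv_rename σ.injective]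

lemma vars_permAct (σ : Equiv.Perm ℕ) (f : K) : Vars (permAct σ f) = σ '' Vars f := by
  ext j
  obtain ⟨i, rfl⟩ := σ.surjective j
  simp [mem_vars_iff_partialDeriv_ne_zero, partialDeriv_permAct]

/-! ### Products in disjoint variables -/

lemma partialDeriv_partialDeriv_mul {g h : K} (hgh : Disjoint (Vars g) (Vars h)) {i j : ℕ}
    (hi : i ∈ Vars g) (hj : j ∈ Vars h) :
    partialDeriv j (partialDeriv i (g * h)) = partialDeriv i g * partialDeriv j h := by
  rw [partialDeriv_mul_of_mem_left hgh hi, Derivation.leibniz, partialDeriv_comm,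
    partialDeriv_eq_zero_of_disjoint hgh.symm hj, map_zero, smul_zero, add_zero, smul_eq_mul]

lemma partialDeriv_partialDeriv_mul_ne_zero {g h : K} (hgh : Disjoint (Vars g) (Vars h))
    {i j : ℕ} (hi : i ∈ Vars g) (hj : j ∈ Vars h) :
    partialDeriv j (partialDeriv i (g * h)) ≠ 0 := by
  rw [partialDeriv_partialDeriv_mul hgh hi hj]
  exact mul_ne_zero (mem_vars_iff_partialDeriv_ne_zero.1 hi)
    (mem_vars_iff_partialDeriv_ne_zero.1 hj)

lemma mul_mul_partialDeriv_partialDeriv {g h : K} (hgh : Disjoint (Vars g) (Vars h)) {i j : ℕ}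
    (hi : i ∈ Vars g) (hj : j ∈ Vars h) :
    g * h * partialDeriv j (partialDeriv i (g * h)) =
      partialDeriv i (g * h) * partialDeriv j (g * h) := by
  rw [partialDeriv_partialDeriv_mul hgh hi hj, partialDeriv_mul_of_mem_left hgh hi,
    partialDeriv_mul_of_mem_right hgh hj]
  ring

lemma mul_eq_mul_of_partialDeriv_eq {g h g' h' : K} (hgh : Disjoint (Vars g) (Vars h))
    (hgh' : Disjoint (Vars g') (Vars h'))
    (hD : ∀ k, partialDeriv k (g * h) = partialDeriv k (g' * h')) {i j : ℕ}
    (hi : i ∈ Vars g) (hj : j ∈ Vars h) (hi' : i ∈ Vars g') (hj' : j ∈ Vars h') :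
    g * h = g' * h' := by
  refine mul_right_cancel₀ (partialDeriv_partialDeriv_mul_ne_zero hgh hi hj) ?_
  calc g * h * partialDeriv j (partialDeriv i (g * h))
      = partialDeriv i (g * h) * partialDeriv j (g * h) :=
        mul_mul_partialDeriv_partialDeriv hgh hi hj
    _ = partialDeriv i (g' * h') * partialDeriv j (g' * h') := by rw [hD, hD]
    _ = g' * h' * partialDeriv j (partialDeriv i (g' * h')) :=
        (mul_mul_partialDeriv_partialDeriv hgh' hi' hj').symm
    _ = g' * h' * partialDeriv j (partialDeriv i (g * h)) := by rw [hD i]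

lemma exists_separated_by_both {α : Type*} {A B A' B' : Set α} (hA : A.Nonempty)
    (hB : B.Nonempty) (hA' : A'.Nonempty) (hB' : B'.Nonempty) (hdisj : Disjoint A' B')
    (hunion : A ∪ B = A' ∪ B') :
    ∃ i ∈ A, ∃ j ∈ B, i ∈ A' ∧ j ∈ B' ∨ i ∈ B' ∧ j ∈ A' := by
  by_contra! hsep
  obtain ⟨a, ha⟩ := hA
  obtain ⟨b, hb⟩ := hB
  have mem_or_mem : ∀ k ∈ A ∪ B, k ∈ A' ∨ k ∈ B' := fun k hk => hunion.subset hk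
  have same_side : ∀ i ∈ A, ∀ j ∈ B, i ∈ A' ↔ j ∈ A' := fun i hi j hj =>
    ⟨fun hi' => (mem_or_mem j (.inr hj)).resolve_right ((hsep i hi j hj).1 hi'),
      fun hj' => (mem_or_mem i (.inl hi)).resolve_right fun hi' => (hsep i hi j hj).2 hi' hj'⟩
  have same_side_as_b : ∀ k ∈ A ∪ B, k ∈ A' ↔ b ∈ A' := by
    rintro k (hk | hk)
    · exact same_side k hk b hb
    · exact (same_side a ha k hk).symm.trans (same_side a ha b hb)
  obtain ⟨x, hx⟩ := hA'
  obtain ⟨y, hy⟩ := hB'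
  have hbA' : b ∈ A' := (same_side_as_b x (hunion ▸ .inl hx)).1 hx
  have hyA' : y ∈ A' := (same_side_as_b y (hunion ▸ .inr hy)).2 hbA'
  exact Set.disjoint_left.1 hdisj hyA' hy

/-- The shape of an expression ending with `×` or `÷`: a variable, or a product of two
nonconstant factors in disjoint variables. Unlike `𝒜(×,÷)`, it ignores how the factors are
built; a quotient is the product with the inverse of the denominator. -/
inductive IsFactorable : K → Prop
  | var (i : ℕ) : IsFactorable (Xv i)
  | mul {g h : K} : Disjoint (Vars g) (Vars h) → (Vars g).Nonempty → (Vars h).Nonempty →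
      IsFactorable (g * h)

lemma IsFactorable.mul_of_isAE {g h : K} (hg : IsAE g) (hh : IsAE h)
    (hd : Disjoint (Vars g) (Vars h)) : IsFactorable (g * h) :=
  .mul hd hg.nonempty_vars hh.nonempty_vars

lemma IsFactorable.div_of_isAE {g h : K} (hg : IsAE g) (hh : IsAE h)
    (hd : Disjoint (Vars g) (Vars h)) : IsFactorable (g / h) := by
  rw [div_eq_mul_inv]
  exact .mul (by rwa [vars_inv]) hg.nonempty_vars (by rw [vars_inv]; exact hh.nonempty_vars)

lemma EndsIn.isFactorable {a : K} (ha : EndsIn a {Op.mul, Op.div}) : IsFactorable a := by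
  obtain ⟨o, ho, ha⟩ := ha
  cases ha with
  | var i => exact .var i
  | mul_base hij => exact .mul_of_isAE (.var _) (.var _) (disjoint_vars_Xv hij)
  | div_base hij => exact .div_of_isAE (.var _) (.var _) (disjoint_vars_Xv hij)
  | mul_rec hg hh hd => exact .mul_of_isAE hg hh hd
  | div_rec hg hh hd => exact .div_of_isAE hg hh hd
  | add_base | sub_base | add_rec | sub_rec => simp at ho

lemma IsFactorable.nonempty_vars {a : K} (ha : IsFactorable a) : (Vars a).Nonempty := by
  cases ha with
  | var i => exact vars_Xv i ▸ Set.singleton_nonempty i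
  | mul hd hg hh =>
    rw [vars_mul_of_nonempty hd hg hh]
    exact hg.inl

lemma IsFactorable.permAct {a : K} (ha : IsFactorable a) (σ : Equiv.Perm ℕ) :
    IsFactorable (permAct σ a) := by
  cases ha with
  | var i =>
    rw [permAct_Xv]
    exact .var (σ i)
  | mul hd hg hh =>
    rw [map_mul]
    refine .mul ?_ ?_ ?_
    · rw [vars_permAct, vars_permAct]
      exact (Set.disjoint_image_iff σ.injective).2 hd
    · rw [vars_permAct]
      exact hg.image σ
    · rw [vars_permAct]
      exact hh.image σ

lemma IsFactorable.eq_of_partialDeriv_eq {a b : K} (ha : IsFactorable a) (hb : IsFactorable b)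
    (hD : ∀ i, partialDeriv i a = partialDeriv i b) : a = b := by
  have hvars : Vars a = Vars b := by
    ext i
    rw [mem_vars_iff_partialDeriv_ne_zero, mem_vars_iff_partialDeriv_ne_zero, hD]
  cases ha with
  | var i =>
    cases hb with
    | var j =>
      rw [vars_Xv, vars_Xv, Set.singleton_eq_singleton_iff] at hvars
      rw [hvars]
    | mul hd hg hh =>
      have hnt := nontrivial_vars_mul hd hg hh
      rw [← hvars, vars_Xv] at hnt
      exact absurd hnt Set.not_nontrivial_singleton
  | mul hd hg hh =>
    cases hb with
    | var j =>
      have hnt := nontrivial_vars_mul hd hg hh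
      rw [hvars, vars_Xv] at hnt
      exact absurd hnt Set.not_nontrivial_singleton
    | @mul g' h' hd' hg' hh' =>
      rw [vars_mul_of_nonempty hd hg hh, vars_mul_of_nonempty hd' hg' hh'] at hvars
      obtain ⟨i, hi, j, hj, ⟨hi', hj'⟩ | ⟨hi', hj'⟩⟩ :=
        exists_separated_by_both hg hh hg' hh' hd' hvars
      · exact mul_eq_mul_of_partialDeriv_eq hd hd' hD hi hj hi' hj'
      · rw [mul_comm g' h'] at hD ⊢
        exact mul_eq_mul_of_partialDeriv_eq hd hd'.symm hD hi hj hi' hj'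

lemma IsFactorable.vars_subset {a : K} (ha : IsFactorable a) {B : Set ℕ}
    (hB : ∀ i ∈ B, ∀ j, partialDeriv j (partialDeriv i a) ≠ 0 → j ∈ B)
    (hne : (Vars a ∩ B).Nonempty) : Vars a ⊆ B := by
  cases ha with
  | var i => simpa [vars_Xv] using hne
  | @mul g h hd hg hh =>
    rw [vars_mul_of_nonempty hd hg hh] at hne ⊢
    have right_of_left : (Vars g ∩ B).Nonempty → Vars h ⊆ B := by
      rintro ⟨i, hig, hiB⟩ j hj
      exact hB i hiB j (partialDeriv_partialDeriv_mul_ne_zero hd hig hj)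
    have left_of_right : (Vars h ∩ B).Nonempty → Vars g ⊆ B := by
      rintro ⟨j, hjh, hjB⟩ i hi
      refine hB j hjB i ?_
      rw [partialDeriv_comm]
      exact partialDeriv_partialDeriv_mul_ne_zero hd hi hjh
    rw [Set.union_inter_distrib_right, Set.union_nonempty] at hne
    rcases hne with hgB | hhB
    · have hsub := right_of_left hgB
      exact Set.union_subset (left_of_right (hh.mono (Set.subset_inter subset_rfl hsub))) hsub
    · have hsub := left_of_right hhB
      exact Set.union_subset hsub (right_of_left (hg.mono (Set.subset_inter subset_rfl hsub)))

/-! ### Sums in disjoint variables -/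

section MultisetPairwise

variable {α β : Type*} {r : α → α → Prop}

lemma multiset_pairwise_cons [Std.Symm r] {a : α} {s : Multiset α} :
    (a ::ₘ s).Pairwise r ↔ (∀ b ∈ s, r a b) ∧ s.Pairwise r := by
  induction s using Quotient.inductionOn with
  | h l => simp [Multiset.pairwise_coe_iff_pairwise]

lemma multiset_pairwise_singleton (a : α) : Multiset.Pairwise r {a} :=
  ⟨[a], rfl, List.pairwise_singleton r a⟩

lemma multiset_pairwise_add {s t : Multiset α} (hs : s.Pairwise r) (ht : t.Pairwise r)
    (hst : ∀ a ∈ s, ∀ b ∈ t, r a b) : (s + t).Pairwise r := by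
  obtain ⟨l, rfl, hl⟩ := hs
  obtain ⟨m, rfl, hm⟩ := ht
  exact ⟨l ++ m, Multiset.coe_add l m, List.pairwise_append.2 ⟨hl, hm, hst⟩⟩

lemma multiset_pairwise_map {f : β → α} {s : Multiset β}
    (hs : s.Pairwise fun a b => r (f a) (f b)) : (s.map f).Pairwise r := by
  obtain ⟨l, rfl, hl⟩ := hs
  exact ⟨l.map f, Multiset.map_coe f l, List.pairwise_map.2 hl⟩

lemma multiset_pairwise_imp_of_mem {q : α → α → Prop} {s : Multiset α} (hs : s.Pairwise r)
    (h : ∀ a ∈ s, ∀ b ∈ s, r a b → q a b) : s.Pairwise q := by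
  obtain ⟨l, rfl, hl⟩ := hs
  exact ⟨l, rfl, hl.imp_of_mem fun ha hb => h _ ha _ hb⟩

end MultisetPairwise

lemma mem_vars_sum {s : Multiset K} {i : ℕ} (hi : i ∈ Vars s.sum) : ∃ a ∈ s, i ∈ Vars a := by
  contrapose! hi
  rw [notMem_vars_iff_partialDeriv_eq_zero, map_multiset_sum]
  refine Multiset.sum_eq_zero fun x hx => ?_
  obtain ⟨a, ha, rfl⟩ := Multiset.mem_map.1 hx
  exact notMem_vars_iff_partialDeriv_eq_zero.1 (hi a ha)

instance : Std.Symm fun a b : K => Disjoint (Vars a) (Vars b) :=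
  ⟨fun _ _ h => h.symm⟩

/-- The summands in `s` have pairwise disjoint variable sets, as required of representatives
when a sum of isomorphism classes is formed. -/
abbrev DisjointVars (s : Multiset K) : Prop :=
  s.Pairwise fun a b => Disjoint (Vars a) (Vars b)

lemma disjoint_vars_sum {a : K} {s : Multiset K} (h : ∀ b ∈ s, Disjoint (Vars a) (Vars b)) :
    Disjoint (Vars a) (Vars s.sum) := by
  refine Set.disjoint_left.2 fun i hia his => ?_
  obtain ⟨b, hb, hib⟩ := mem_vars_sum his
  exact Set.disjoint_left.1 (h b hb) hia hib

lemma DisjointVars.partialDeriv_sum {s : Multiset K} (hs : DisjointVars s) {a : K} (ha : a ∈ s)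
    {i : ℕ} (hi : i ∈ Vars a) : partialDeriv i s.sum = partialDeriv i a := by
  obtain ⟨t, rfl⟩ := Multiset.exists_cons_of_mem ha
  have hdisj := disjoint_vars_sum (multiset_pairwise_cons.1 hs).1
  rw [Multiset.sum_cons, map_add, partialDeriv_eq_zero_of_disjoint hdisj hi, add_zero]

lemma DisjointVars.ncard_vars_sum {s : Multiset K} (hs : DisjointVars s) :
    (Vars s.sum).ncard = (s.map fun a => (Vars a).ncard).sum := by
  induction s using Multiset.induction with
  | empty => simp [vars_zero]
  | cons a s ih =>
    obtain ⟨ha, hs⟩ := multiset_pairwise_cons.1 hs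
    have hdisj := disjoint_vars_sum ha
    rw [Multiset.sum_cons, vars_add hdisj,
      Set.ncard_union_eq hdisj (finite_vars a) (finite_vars s.sum), ih hs, Multiset.map_cons,
      Multiset.sum_cons]

lemma DisjointVars.eq_of_mem_vars {s : Multiset K} (hs : DisjointVars s) {a b : K} (ha : a ∈ s)
    (hb : b ∈ s) {i : ℕ} (hia : i ∈ Vars a) (hib : i ∈ Vars b) : a = b := by
  by_contra hne
  exact Set.disjoint_left.1 (hs.forall ha hb hne) hia hib

lemma DisjointVars.nodup {s : Multiset K} (hs : DisjointVars s)
    (hne : ∀ a ∈ s, (Vars a).Nonempty) : s.Nodup := by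
  rw [Multiset.nodup_iff_pairwise]
  refine multiset_pairwise_imp_of_mem hs fun a ha b _ hab heq => ?_
  subst heq
  exact (hne a ha).ne_empty (disjoint_self.1 hab)

lemma DisjointVars.map_permAct {s : Multiset K} (hs : DisjointVars s) (σ : Equiv.Perm ℕ) :
    DisjointVars (s.map (permAct σ)) := by
  refine multiset_pairwise_map (multiset_pairwise_imp_of_mem hs fun a _ b _ hab => ?_)
  rw [vars_permAct, vars_permAct]
  exact (Set.disjoint_image_iff σ.injective).2 hab

/-! ### Uniqueness -/

lemma exists_vars_subset_of_sum_eq {s t : Multiset K} (hs : DisjointVars s)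
    (ht : DisjointVars t) (hst : s.sum = t.sum) {a : K} (ha : a ∈ s) (hfa : IsFactorable a) :
    ∃ b ∈ t, Vars a ⊆ Vars b := by
  obtain ⟨i, hi⟩ := hfa.nonempty_vars
  obtain ⟨b, hb, hib⟩ : ∃ b ∈ t, i ∈ Vars b := by
    apply mem_vars_sum
    rw [mem_vars_iff_partialDeriv_ne_zero, ← hst, hs.partialDeriv_sum ha hi]
    exact mem_vars_iff_partialDeriv_ne_zero.1 hi
  refine ⟨b, hb, hfa.vars_subset (fun k hk j hjk => ?_) ⟨i, hi, hib⟩⟩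
  have hka : k ∈ Vars a :=
    mem_vars_iff_partialDeriv_ne_zero.2 fun h => hjk (by rw [h, map_zero])
  rw [← hs.partialDeriv_sum ha hka, hst, ht.partialDeriv_sum hb hk, partialDeriv_comm] at hjk
  exact mem_vars_iff_partialDeriv_ne_zero.2 fun h => hjk (by rw [h, map_zero])

lemma subset_of_sum_eq {s t : Multiset K} (hs : DisjointVars s) (ht : DisjointVars t)
    (hfs : ∀ a ∈ s, IsFactorable a) (hft : ∀ b ∈ t, IsFactorable b) (hst : s.sum = t.sum) :
    s ⊆ t := by
  intro a ha
  obtain ⟨b, hb, hab⟩ := exists_vars_subset_of_sum_eq hs ht hst ha (hfs a ha)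
  obtain ⟨c, hc, hbc⟩ := exists_vars_subset_of_sum_eq ht hs hst.symm hb (hft b hb)
  obtain ⟨i, hi⟩ := (hfs a ha).nonempty_vars
  obtain rfl : a = c := hs.eq_of_mem_vars ha hc hi (hbc (hab hi))
  have hvars : Vars a = Vars b := hab.antisymm hbc
  suffices a = b from this ▸ hb
  refine (hfs a ha).eq_of_partialDeriv_eq (hft b hb) fun k => ?_
  by_cases hk : k ∈ Vars a
  · rw [← hs.partialDeriv_sum ha hk, ← ht.partialDeriv_sum hb (hab hk), hst]
  · rw [notMem_vars_iff_partialDeriv_eq_zero.1 hk,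
      notMem_vars_iff_partialDeriv_eq_zero.1 (hvars ▸ hk)]

lemma eq_of_sum_eq {s t : Multiset K} (hs : DisjointVars s) (ht : DisjointVars t)
    (hfs : ∀ a ∈ s, IsFactorable a) (hft : ∀ b ∈ t, IsFactorable b) (hst : s.sum = t.sum) :
    s = t :=
  (Multiset.Nodup.ext (hs.nodup fun a ha => (hfs a ha).nonempty_vars)
    (ht.nodup fun b hb => (hft b hb).nonempty_vars)).2 fun _ =>
      ⟨@subset_of_sum_eq s t hs ht hfs hft hst _, @subset_of_sum_eq t s ht hs hft hfs hst.symm _⟩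

lemma rel_iso_of_iso_sum {s t : Multiset K} (hs : DisjointVars s) (ht : DisjointVars t)
    (hfs : ∀ a ∈ s, IsFactorable a) (hft : ∀ b ∈ t, IsFactorable b) (hst : Iso s.sum t.sum) :
    Multiset.Rel Iso s t := by
  obtain ⟨σ, hσ⟩ := hst
  have hmap : s.map (permAct σ) = t := by
    refine eq_of_sum_eq (hs.map_permAct σ) ht ?_ hft (by rw [← hσ, map_multiset_sum])
    simp only [Multiset.mem_map, forall_exists_index, and_imp, forall_apply_eq_imp_iff₂]
    exact fun a ha => (hfs a ha).permAct σ
  rw [← hmap, Multiset.rel_map_right]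
  exact Multiset.rel_refl_of_refl_on fun a _ => ⟨σ, rfl⟩

/-! ### Existence -/

lemma EndsWith.isAE {f : K} {o : Op} (hf : EndsWith f o) : IsAE f := by
  cases hf with
  | var i => exact .var i
  | add_base hij => exact .add (.var _) (.var _) (disjoint_vars_Xv hij)
  | sub_base hij => exact .sub (.var _) (.var _) (disjoint_vars_Xv hij)
  | mul_base hij => exact .mul (.var _) (.var _) (disjoint_vars_Xv hij)
  | div_base hij => exact .div (.var _) (.var _) (disjoint_vars_Xv hij)
  | add_rec hg hh hd => exact .add hg hh hd
  | mul_rec hg hh hd => exact .mul hg hh hd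
  | div_rec hg hh hd => exact .div hg hh hd
  | sub_rec hg hh hd => exact .sub hg hh hd

/-- `f` itself, rather than its isomorphism class, is the sum of the family `s` of expressions
in `𝒜(×,÷)` with pairwise disjoint variable sets; a single summand is allowed. -/
structure IsSumDecomp (f : K) (s : Multiset K) : Prop where
  isAE_and_endsIn : ∀ a ∈ s, IsAE a ∧ EndsIn a {Op.mul, Op.div}
  disjointVars : DisjointVars s
  sum_eq : s.sum = f

lemma isSumDecomp_singleton {f : K} (hf : IsAE f) (hend : EndsIn f {Op.mul, Op.div}) :
    IsSumDecomp f {f} where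
  isAE_and_endsIn := by simpa using ⟨hf, hend⟩
  disjointVars := multiset_pairwise_singleton f
  sum_eq := Multiset.sum_singleton f

lemma IsSumDecomp.vars_subset {f : K} {s : Multiset K} (hs : IsSumDecomp f s) {a : K}
    (ha : a ∈ s) : Vars a ⊆ Vars f := by
  intro i hi
  rw [mem_vars_iff_partialDeriv_ne_zero, ← hs.sum_eq, hs.disjointVars.partialDeriv_sum ha hi]
  exact mem_vars_iff_partialDeriv_ne_zero.1 hi

lemma IsSumDecomp.add {g h : K} {s t : Multiset K} (hs : IsSumDecomp g s) (ht : IsSumDecomp h t)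
    (hd : Disjoint (Vars g) (Vars h)) : IsSumDecomp (g + h) (s + t) where
  isAE_and_endsIn a ha :=
    (Multiset.mem_add.1 ha).elim (hs.isAE_and_endsIn a) (ht.isAE_and_endsIn a)
  disjointVars := multiset_pairwise_add hs.disjointVars ht.disjointVars fun _ ha _ hb =>
    hd.mono (hs.vars_subset ha) (ht.vars_subset hb)
  sum_eq := by rw [Multiset.sum_add, hs.sum_eq, ht.sum_eq]

lemma IsSumDecomp.card_pos {f : K} {s : Multiset K} (hs : IsSumDecomp f s) (hf : f ≠ 0) :
    0 < s.card := by
  rw [Multiset.card_pos]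
  rintro rfl
  exact hf (by rw [← hs.sum_eq, Multiset.sum_zero])

lemma IsSumDecomp.classSumDecomp {f : K} {s : Multiset K} (hs : IsSumDecomp f s)
    (hcard : 2 ≤ s.card) : ClassSumDecomp (Vars f).ncard f s := by
  refine ⟨hcard, hs.isAE_and_endsIn, hs.disjointVars, ?_, ?_⟩
  · rw [hs.sum_eq]
    exact Iso.refl f
  · rw [← hs.disjointVars.ncard_vars_sum, hs.sum_eq]

lemma EndsWith.exists_eq_add {f : K} (hf : EndsWith f Op.add) :
    ∃ g h o₁ o₂, f = g + h ∧ Disjoint (Vars g) (Vars h) ∧ (EndsWith g o₁ ∧ o₁ ≠ Op.sub) ∧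
      (EndsWith h o₂ ∧ o₂ ≠ Op.sub) := by
  cases hf with
  | add_base hij =>
    exact ⟨_, _, _, _, rfl, disjoint_vars_Xv hij, ⟨.var _, by simp⟩, ⟨.var _, by simp⟩⟩
  | add_rec _ _ hd _ ho₁ ho₂ hg hh => exact ⟨_, _, _, _, rfl, hd, ⟨hg, ho₁⟩, ⟨hh, ho₂⟩⟩

lemma EndsWith.exists_isSumDecomp {f : K} {o : Op} (hf : EndsWith f o) (ho : o ≠ Op.sub) :
    ∃ s, IsSumDecomp f s := by
  have hAE := hf.isAE
  have hend := hf
  induction hf with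
  | var | mul_base | div_base | mul_rec | div_rec =>
    exact ⟨_, isSumDecomp_singleton hAE ⟨_, by simp, hend⟩⟩
  | @add_base i j hij =>
    exact ⟨_, (isSumDecomp_singleton (.var i) ⟨_, by simp, .var i⟩).add
      (isSumDecomp_singleton (.var j) ⟨_, by simp, .var j⟩) (disjoint_vars_Xv hij)⟩
  | add_rec hg hh hd _ ho₁ ho₂ hgo hho ihg ihh =>
    obtain ⟨s, hs⟩ := ihg ho₁ hg hgo
    obtain ⟨t, ht⟩ := ihh ho₂ hh hho
    exact ⟨s + t, hs.add ht hd⟩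
  | sub_base | sub_rec => exact absurd rfl ho

theorem EndsWith.exists_classSumDecomp {f : K} (hf : EndsWith f Op.add) :
    ∃ s, ClassSumDecomp (Vars f).ncard f s := by
  obtain ⟨g, h, o₁, o₂, rfl, hd, ⟨hg, ho₁⟩, ⟨hh, ho₂⟩⟩ := hf.exists_eq_add
  obtain ⟨s, hs⟩ := hg.exists_isSumDecomp ho₁
  obtain ⟨t, ht⟩ := hh.exists_isSumDecomp ho₂
  refine ⟨s + t, (hs.add ht hd).classSumDecomp ?_⟩
  rw [Multiset.card_add]
  exact Nat.add_le_add (hs.card_pos hg.isAE.ne_zero) (ht.card_pos hh.isAE.ne_zero)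

theorem ClassSumDecomp.rel_iso {m n : ℕ} {f : K} {s t : Multiset K} (hs : ClassSumDecomp m f s)
    (ht : ClassSumDecomp n f t) : Multiset.Rel Iso s t := by
  obtain ⟨-, hends, hds, hfs, -⟩ := hs
  obtain ⟨-, hendt, hdt, hft, -⟩ := ht
  exact rel_iso_of_iso_sum hds hdt (fun a ha => (hends a ha).2.isFactorable)
    (fun b hb => (hendt b hb).2.isFactorable) (hfs.symm.trans hft)

lemma ncard_varsUpTo (n : ℕ) : (varsUpTo n).ncard = n := by
  have h : varsUpTo n = Finset.Icc 1 n := by simp [varsUpTo, Set.ext_iff]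
  rw [h, Set.ncard_coe_finset, Nat.card_Icc, Nat.add_sub_cancel]

/-- For `n ≥ 2`, every class `[f] ∈ 𝒜̄ₙ(+)` can be expressed uniquely,
up to the order of the summands, as `[f] = [f₁] + ⋯ + [f_r]` with each
`fⱼ ∈ 𝒜_{kⱼ}(×,÷)` and `(k₁,…,k_r)` a non-trivial partition of `n`. -/
theorem class_sum_decomposition (n : ℕ) (hn : 2 ≤ n) (f : K)
    (hf : f ∈ AEn n) (hadd : EndsWith f Op.add) :
    (∃ s : Multiset K, ClassSumDecomp n f s) ∧
    ∀ s t : Multiset K, ClassSumDecomp n f s → ClassSumDecomp n f t →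
      Multiset.Rel Iso s t := by
  refine ⟨?_, fun _ _ hs ht => hs.rel_iso ht⟩
  have hcard : (Vars f).ncard = n := by rw [hf.2, ncard_varsUpTo]
  exact hcard ▸ hadd.exists_classSumDecomp

end
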